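/- Let d ≥ 2, let S = {x ∈ ℝ^d : ‖x‖ = 1} be the unit sphere with uniform probability measure σ, and fix α > 0. Then for every integer n ≥ 1 and all points x_1, …, x_n ∈ S, (1/n²) · Σ_{i,j=1}^n e^{α⟨x_i, x_j⟩} ≥ ∫_S ∫_S e^{α⟨x,y⟩} dσ(x) dσ(y). -/

import Mathlib

open scoped RealInnerProductSpace BigOperators
open MeasureTheory

/-- The map induced on the unit sphere of `ℝ^d` by a linear isometry (rotation). -/
noncomputable def sphereRot {d : ℕ}
    (R : EuclideanSpace ℝ (Fin d) ≃ₗᵢ[ℝ] EuclideanSpace ℝ (Fin d))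
    (x : Metric.sphere (0 : EuclideanSpace ℝ (Fin d)) 1) :
    Metric.sphere (0 : EuclideanSpace ℝ (Fin d)) 1 :=
  ⟨R x, by
    have hx : ‖(x : EuclideanSpace ℝ (Fin d))‖ = 1 := mem_sphere_zero_iff_norm.mp x.2
    simp [mem_sphere_zero_iff_norm, R.norm_map, hx]⟩

section SphereKernel

variable {ι : Type*} [Fintype ι]

/-- A continuous function on a compact space is integrable against a finite measure. -/
lemma Continuous.integrable_of_compactSpace {X : Type*} [TopologicalSpace X] [CompactSpace X]
    [MeasurableSpace X] [OpensMeasurableSpace X] {μ : Measure X} [IsFiniteMeasure μ]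
    {f : X → ℝ} (hf : Continuous f) : Integrable f μ :=
  hf.integrable_of_hasCompactSupport (HasCompactSupport.of_compactSpace f)

/-- The double integral of `⟪a, b⟫ ^ k` expressed through the degree-`k` moments. -/
lemma integral_integral_inner_pow (μ ν : Measure (Metric.sphere (0 : EuclideanSpace ℝ ι) 1))
    [IsFiniteMeasure μ] [IsFiniteMeasure ν] (k : ℕ) :
    ∫ a, ∫ b, ⟪(a : EuclideanSpace ℝ ι), (b : EuclideanSpace ℝ ι)⟫ ^ k ∂ν ∂μ =
      ∑ p : Fin k → ι, (∫ a, ∏ i, (a : EuclideanSpace ℝ ι) (p i) ∂μ) *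
        ∫ b, ∏ i, (b : EuclideanSpace ℝ ι) (p i) ∂ν := by
  have hcont (p : Fin k → ι) : Continuous fun a : Metric.sphere (0 : EuclideanSpace ℝ ι) 1 ↦
      ∏ i, (a : EuclideanSpace ℝ ι) (p i) := by fun_prop
  have hexpand (a b : EuclideanSpace ℝ ι) :
      ⟪a, b⟫ ^ k = ∑ p : Fin k → ι, (∏ i, a (p i)) * ∏ i, b (p i) := by
    simp only [PiLp.inner_apply, RCLike.inner_apply, conj_trivial, Fintype.sum_pow,
      ← Finset.prod_mul_distrib, mul_comm]
  simp_rw [hexpand]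
  have hinner (a : Metric.sphere (0 : EuclideanSpace ℝ ι) 1) :
      ∫ b, ∑ p : Fin k → ι, (∏ i, (a : EuclideanSpace ℝ ι) (p i)) *
        ∏ i, (b : EuclideanSpace ℝ ι) (p i) ∂ν =
      ∑ p : Fin k → ι, (∏ i, (a : EuclideanSpace ℝ ι) (p i)) *
        ∫ b, ∏ i, (b : EuclideanSpace ℝ ι) (p i) ∂ν := by
    rw [integral_finsetSum _ fun p _ ↦ (hcont p).integrable_of_compactSpace.const_mul _]
    simp_rw [integral_const_mul]
  simp_rw [hinner]
  rw [integral_finsetSum _ fun p _ ↦ (hcont p).integrable_of_compactSpace.mul_const _]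
  simp_rw [integral_mul_const]

/-- Termwise integration of the exponential series of the kernel `exp (α ⟪a, b⟫)`. -/
lemma hasSum_integral_integral_exp_inner (α : ℝ)
    (μ ν : Measure (Metric.sphere (0 : EuclideanSpace ℝ ι) 1))
    [IsFiniteMeasure μ] [IsFiniteMeasure ν] :
    HasSum (fun k : ℕ ↦ α ^ k / k.factorial *
        ∫ a, ∫ b, ⟪(a : EuclideanSpace ℝ ι), (b : EuclideanSpace ℝ ι)⟫ ^ k ∂ν ∂μ)
      (∫ a, ∫ b, Real.exp (α * ⟪(a : EuclideanSpace ℝ ι), (b : EuclideanSpace ℝ ι)⟫) ∂ν ∂μ) := by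
  let S := Metric.sphere (0 : EuclideanSpace ℝ ι) 1
  let F (k : ℕ) (z : S × S) : ℝ :=
    α ^ k / k.factorial * ⟪(z.1 : EuclideanSpace ℝ ι), (z.2 : EuclideanSpace ℝ ι)⟫ ^ k
  have hF (k : ℕ) : Continuous (F k) := by fun_prop
  have hexp : Continuous fun z : S × S ↦
      Real.exp (α * ⟪(z.1 : EuclideanSpace ℝ ι), (z.2 : EuclideanSpace ℝ ι)⟫) := by fun_prop
  have hbound (k : ℕ) (z : S × S) : ‖F k z‖ ≤ |α| ^ k / k.factorial := by
    have h1 : |⟪(z.1 : EuclideanSpace ℝ ι), (z.2 : EuclideanSpace ℝ ι)⟫| ≤ 1 := by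
      simpa using abs_real_inner_le_norm (z.1 : EuclideanSpace ℝ ι) (z.2 : EuclideanSpace ℝ ι)
    simp only [F, Real.norm_eq_abs, abs_mul, abs_div, abs_pow, Nat.abs_cast]
    exact mul_le_of_le_one_right (by positivity) (pow_le_one₀ (abs_nonneg _) h1)
  have key : HasSum (fun k ↦ ∫ z, F k z ∂(μ.prod ν))
      (∫ z : S × S, Real.exp (α * ⟪(z.1 : EuclideanSpace ℝ ι), (z.2 : EuclideanSpace ℝ ι)⟫)
        ∂(μ.prod ν)) := by
    refine hasSum_integral_of_dominated_convergence (fun k _ ↦ |α| ^ k / k.factorial)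
      (fun k ↦ (hF k).aestronglyMeasurable) (fun k ↦ .of_forall (hbound k))
      (.of_forall fun _ ↦ Real.summable_pow_div_factorial _) (integrable_const _)
      (.of_forall fun z ↦ ?_)
    have h := NormedSpace.expSeries_div_hasSum_exp
      (α * ⟪(z.1 : EuclideanSpace ℝ ι), (z.2 : EuclideanSpace ℝ ι)⟫)
    rw [← Real.exp_eq_exp_ℝ] at h
    simpa only [F, mul_pow, mul_div_right_comm] using h
  rw [integral_prod _ hexp.integrable_of_compactSpace] at key
  convert key using 2 with k
  rw [integral_prod _ (hF k).integrable_of_compactSpace]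
  simp only [F, integral_const_mul]
  rfl

/-- Positive definiteness of `exp (α ⟪a, b⟫)` on the sphere, tested on `μ - ν`. -/
lemma two_mul_integral_integral_exp_inner_le {α : ℝ} (hα : 0 ≤ α)
    (μ ν : Measure (Metric.sphere (0 : EuclideanSpace ℝ ι) 1))
    [IsFiniteMeasure μ] [IsFiniteMeasure ν] :
    2 * ∫ a, ∫ b, Real.exp (α * ⟪(a : EuclideanSpace ℝ ι), (b : EuclideanSpace ℝ ι)⟫) ∂ν ∂μ ≤
      (∫ a, ∫ b, Real.exp (α * ⟪(a : EuclideanSpace ℝ ι), (b : EuclideanSpace ℝ ι)⟫) ∂μ ∂μ) +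
      ∫ a, ∫ b, Real.exp (α * ⟪(a : EuclideanSpace ℝ ι), (b : EuclideanSpace ℝ ι)⟫) ∂ν ∂ν := by
  refine hasSum_le (fun k ↦ ?_) ((hasSum_integral_integral_exp_inner α μ ν).mul_left 2)
    ((hasSum_integral_integral_exp_inner α μ μ).add (hasSum_integral_integral_exp_inner α ν ν))
  rw [← mul_add, mul_left_comm]
  refine mul_le_mul_of_nonneg_left ?_ (by positivity)
  simp only [integral_integral_inner_pow, Finset.mul_sum, ← Finset.sum_add_distrib]
  refine Finset.sum_le_sum fun p _ ↦ ?_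
  nlinarith [sq_nonneg ((∫ a, ∏ i, (a : EuclideanSpace ℝ ι) (p i) ∂μ) -
    ∫ b, ∏ i, (b : EuclideanSpace ℝ ι) (p i) ∂ν)]

end SphereKernel

/-- For a rotation-invariant measure the potential of `exp (α ⟪a, ·⟫)` does not depend on `a`. -/
lemma integral_exp_inner_eq_of_rotation_invariant {d : ℕ} (α : ℝ)
    (σ : Measure (Metric.sphere (0 : EuclideanSpace ℝ (Fin d)) 1))
    (hσinv : ∀ R : EuclideanSpace ℝ (Fin d) ≃ₗᵢ[ℝ] EuclideanSpace ℝ (Fin d),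
      Measure.map (sphereRot R) σ = σ)
    (a a' : Metric.sphere (0 : EuclideanSpace ℝ (Fin d)) 1) :
    ∫ b, Real.exp (α * ⟪(a : EuclideanSpace ℝ (Fin d)), (b : EuclideanSpace ℝ (Fin d))⟫) ∂σ =
      ∫ b, Real.exp (α * ⟪(a' : EuclideanSpace ℝ (Fin d)),
        (b : EuclideanSpace ℝ (Fin d))⟫) ∂σ := by
  let R := (ℝ ∙ ((a : EuclideanSpace ℝ (Fin d)) - a'))ᗮ.reflection
  have hR : R a = a' := Submodule.reflection_sub (by simp)
  have hrot : Continuous (sphereRot R) :=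
    (R.continuous.comp continuous_subtype_val).subtype_mk _
  have hcont : Continuous fun b : Metric.sphere (0 : EuclideanSpace ℝ (Fin d)) 1 ↦
      Real.exp (α * ⟪(a' : EuclideanSpace ℝ (Fin d)), (b : EuclideanSpace ℝ (Fin d))⟫) := by
    fun_prop
  conv_rhs => rw [← hσinv R]
  rw [integral_map hrot.aemeasurable hcont.aestronglyMeasurable]
  simp only [sphereRot, ← hR, R.inner_map_map]

/-- Let `σ` be the uniform (rotation-invariant) probability measure on the
unit sphere `S ⊂ ℝ^d`, `d ≥ 2`, and `α > 0`. For any `n ≥ 1` points `x i ∈ S`,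
`(1/n²) ∑_{i,j} exp (α ⟪x i, x j⟫) ≥ ∫∫ exp (α ⟪x, y⟫) dσ(x) dσ(y)`. -/
theorem discrete_energy_ge_continuous_energy (d : ℕ) (hd : 2 ≤ d) (α : ℝ) (hα : 0 < α)
    (σ : Measure (Metric.sphere (0 : EuclideanSpace ℝ (Fin d)) 1))
    (hσprob : IsProbabilityMeasure σ)
    (hσinv : ∀ R : EuclideanSpace ℝ (Fin d) ≃ₗᵢ[ℝ] EuclideanSpace ℝ (Fin d),
      Measure.map (sphereRot R) σ = σ)
    (n : ℕ) (hn : 1 ≤ n) (x : Fin n → Metric.sphere (0 : EuclideanSpace ℝ (Fin d)) 1) :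
    (∫ a, ∫ b, Real.exp (α * ⟪(a : EuclideanSpace ℝ (Fin d)),
        (b : EuclideanSpace ℝ (Fin d))⟫) ∂σ ∂σ) ≤
      (1 / (n : ℝ) ^ 2) * ∑ i, ∑ j, Real.exp (α * ⟪(x i : EuclideanSpace ℝ (Fin d)),
        (x j : EuclideanSpace ℝ (Fin d))⟫) := by
  obtain ⟨C, hC⟩ : ∃ C, ∀ a : Metric.sphere (0 : EuclideanSpace ℝ (Fin d)) 1,
      ∫ b, Real.exp (α * ⟪(a : EuclideanSpace ℝ (Fin d)),
        (b : EuclideanSpace ℝ (Fin d))⟫) ∂σ = C :=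
    ⟨_, fun a ↦ integral_exp_inner_eq_of_rotation_invariant α σ hσinv a (x ⟨0, hn⟩)⟩
  have hdirac (f : Metric.sphere (0 : EuclideanSpace ℝ (Fin d)) 1 → ℝ) :
      ∫ a, f a ∂(∑ i, Measure.dirac (x i)) = ∑ i, f (x i) := by
    rw [integral_finsetSum_measure fun i _ ↦ integrable_dirac (by simp)]
    simp
  have h := two_mul_integral_integral_exp_inner_le hα.le (∑ i, Measure.dirac (x i))
    ((n : NNReal) • σ)
  simp only [hdirac, integral_smul_nnreal_measure, hC, integral_const,
    NNReal.smul_def, NNReal.coe_natCast, smul_eq_mul, Finset.sum_const, Finset.card_univ,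
    Fintype.card_fin, nsmul_eq_mul, measureReal_nnreal_smul_apply, probReal_univ, mul_one] at h
  have hn' : (0 : ℝ) < n := by exact_mod_cast hn
  simp only [hC, integral_const, probReal_univ, one_smul]
  rw [one_div, ← div_eq_inv_mul, le_div_iff₀ (by positivity)]
  linarith
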